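/- Assume the dual pair (E, E') is (K) over A. If the right A-module E is flat, then the left A-module E' is 1-injective; that is, whenever a sequence A^{1×k_1} →(•P_1) A^{1×k_2} →(•P_2) A^{1×k_3} →(•P_3) A^{1×k_4} of right multiplications by matrices P_1 ∈ A^{k_1×k_2}, P_2 ∈ A^{k_2×k_3}, P_3 ∈ A^{k_3×k_4} is exact at A^{1×k_2} and at A^{1×k_3}, the induced sequence (E')^{k_3} →(P_2•) (E')^{k_2} →(P_1•) (E')^{k_1} is exact. -/

import Mathlib

/-- Right multiplication `x ↦ x P` by the matrix `P ∈ A^{q×r}` on row vectors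
`x ∈ A^{1×q}`: `(x P) j = ∑ i, x i * P i j`. -/
def rmulA {A : Type*} [Ring A] {q r : ℕ} (P : Matrix (Fin q) (Fin r) A) :
    (Fin q → A) → (Fin r → A) :=
  fun x j => ∑ i, x i * P i j

/-- Right multiplication `x ↦ x P` by the matrix `P ∈ A^{q×r}` on row vectors
`x ∈ E^{1×q}` with entries in a right `A`-module `E` (the right action of `A` on `E`
being encoded as a left `Aᵐᵒᵖ`-action): `(x P) j = ∑ i, x i • P i j`. -/
def rmulE {A E : Type*} [Ring A] [AddCommGroup E] [Module Aᵐᵒᵖ E] {q r : ℕ}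
    (P : Matrix (Fin q) (Fin r) A) : (Fin q → E) → (Fin r → E) :=
  fun x j => ∑ i, MulOpposite.op (P i j) • x i

/-- Left multiplication `x' ↦ P x'` by the matrix `P ∈ A^{q×r}` on column vectors
`x' ∈ (E')^r` with entries in a left `A`-module `E'`: `(P x') i = ∑ j, P i j • x' j`. -/
def lmulE' {A E' : Type*} [Ring A] [AddCommGroup E'] [Module A E'] {q r : ℕ}
    (P : Matrix (Fin q) (Fin r) A) : (Fin r → E') → (Fin q → E') :=
  fun x' i => ∑ j, P i j • x' j

/-- The weak topology on `X` determined by a pairing `B : X → Y → 𝕜`,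
i.e. the coarsest topology making every map `x ↦ B x y` (`y ∈ Y`) continuous. -/
noncomputable def weakTopology {𝕜 X Y : Type*} [TopologicalSpace 𝕜]
    (B : X → Y → 𝕜) : TopologicalSpace X :=
  TopologicalSpace.induced B Pi.topologicalSpace

/-- Flatness of the right `A`-module `E` (`A` not necessarily commutative), expressed
by the standard equational criterion: every relation `∑ i, x i • a i = 0` in `E`
comes from relations in `A`. -/
def RightFlat (A E : Type*) [Ring A] [AddCommGroup E] [Module Aᵐᵒᵖ E] : Prop :=
  ∀ (q : ℕ) (a : Fin q → A) (x : Fin q → E),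
    ∑ i, MulOpposite.op (a i) • x i = 0 →
    ∃ (r : ℕ) (y : Fin r → E) (Q : Matrix (Fin r) (Fin q) A),
      (∀ j, ∑ i, Q j i * a i = 0) ∧ ∀ i, x i = ∑ j, MulOpposite.op (Q j i) • y j

/-- The weak topology `σ(E^{1×k}, (E')^k)` on `E^{1×k}` determined by the componentwise
extension `⟨x, x'⟩ = ∑ i, ⟨x i, x' i⟩` of the duality bracket `B` to `E^{1×k} × (E')^k`. -/
noncomputable def sigmaRow {𝕜 E E' : Type*} [RCLike 𝕜] [AddCommGroup E] [Module 𝕜 E]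
    [AddCommGroup E'] [Module 𝕜 E'] (B : E →ₗ[𝕜] E' →ₗ[𝕜] 𝕜) (k : ℕ) :
    TopologicalSpace (Fin k → E) :=
  weakTopology fun (x : Fin k → E) (x' : Fin k → E') => ∑ i, B (x i) (x' i)

/-- The weak topology `σ((E')^k, E^{1×k})` on `(E')^k` determined by the componentwise
extension `⟨x, x'⟩ = ∑ i, ⟨x i, x' i⟩` of the duality bracket `B` to `E^{1×k} × (E')^k`. -/
noncomputable def sigmaCol {𝕜 E E' : Type*} [RCLike 𝕜] [AddCommGroup E] [Module 𝕜 E]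
    [AddCommGroup E'] [Module 𝕜 E'] (B : E →ₗ[𝕜] E' →ₗ[𝕜] 𝕜) (k : ℕ) :
    TopologicalSpace (Fin k → E') :=
  weakTopology fun (x' : Fin k → E') (x : Fin k → E) => ∑ i, B (x i) (x' i)

/-!
By flatness, tensoring the two exactness hypotheses with `E` keeps them exact. Exactness at
`E^{1×k₃}` exhibits the image of `•P₂` as the kernel of the weakly continuous map `•P₃`, so it is
weakly closed. By the Köthe property the image of `P₂•` is then weakly closed too, hence equal to
its biorthogonal, which is the orthogonal of `ker (•P₂) = im (•P₁)`, that is, `ker (P₁•)`.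
-/

open scoped Topology

section WeakTopology

variable {𝕜 X Y : Type*} [TopologicalSpace 𝕜]

theorem continuous_weakTopology_apply (b : X → Y → 𝕜) (y : Y) :
    @Continuous X 𝕜 (weakTopology b) _ fun x => b x y :=
  let := weakTopology b
  (continuous_apply y).comp continuous_induced_dom

theorem exists_finset_ne_of_isClosed_weakTopology {b : X → Y → 𝕜} {S : Set X}
    (hS : IsClosed[weakTopology b] S) {x : X} (hx : x ∉ S) :
    ∃ I : Finset Y, ∀ m ∈ S, ∃ y ∈ I, b m y ≠ b x y := by
  obtain ⟨V, hV, hVS⟩ := isOpen_induced_iff.1 hS.isOpen_compl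
  have hxV : b x ∈ V := by rwa [← Set.mem_preimage, hVS]
  obtain ⟨I, u, hu, hIV⟩ := isOpen_pi_iff.1 hV _ hxV
  refine ⟨I, fun m hm => ?_⟩
  by_contra! hmx
  have hmV : m ∈ b ⁻¹' V := hIV fun y hy => hmx y hy ▸ (hu y hy).2
  exact (hVS ▸ hmV) hm

theorem t1Space_weakTopology [CommRing 𝕜] [T1Space 𝕜] [AddCommGroup X] [Module 𝕜 X]
    [AddCommGroup Y] [Module 𝕜 Y] {b : X →ₗ[𝕜] Y →ₗ[𝕜] 𝕜} (hb : b.SeparatingLeft) :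
    @T1Space X (weakTopology fun x y => b x y) :=
  let := weakTopology fun x y => b x y
  have hb_inj : Function.Injective b :=
    LinearMap.ker_eq_bot.1 (LinearMap.separatingLeft_iff_ker_eq_bot.1 hb)
  t1Space_of_injective_of_continuous (DFunLike.coe_injective.comp hb_inj) continuous_induced_dom

/-- A basic weak neighbourhood of `x` contains everything that agrees with `x` against finitely
many `y`, so separating `x` from `M` is a finite-dimensional linear problem, for any topology on
`𝕜`. -/
theorem mem_of_isClosed_weakTopology [Field 𝕜] [AddCommGroup X] [Module 𝕜 X]
    [AddCommGroup Y] [Module 𝕜 Y] {b : X →ₗ[𝕜] Y →ₗ[𝕜] 𝕜}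
    {M : Submodule 𝕜 X} (hM : IsClosed[weakTopology fun x y => b x y] (M : Set X)) {x : X}
    (hx : ∀ y, (∀ m ∈ M, b m y = 0) → b x y = 0) : x ∈ M := by
  by_contra hxM
  obtain ⟨I, hI⟩ := exists_finset_ne_of_isClosed_weakTopology hM hxM
  let T : X →ₗ[𝕜] (I → 𝕜) := LinearMap.pi fun i => b.flip i
  have hT : T x ∉ M.map T := by
    rintro ⟨m, hm, hmx⟩
    obtain ⟨y, hy, hne⟩ := hI m hm
    exact hne (congrFun hmx ⟨y, hy⟩)
  obtain ⟨f, hfx, hfM⟩ := Submodule.exists_le_ker_of_notMem hT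
  obtain ⟨y, hy⟩ : f ∘ₗ T ∈ LinearMap.range b.flip := by
    refine Submodule.span_le.2 ?_ (mem_span_of_iInf_ker_le_ker (L := fun i : I => b.flip i) ?_)
    · rintro _ ⟨i, rfl⟩
      exact ⟨i, rfl⟩
    · rw [← LinearMap.ker_pi]
      exact LinearMap.ker_le_ker_comp T f
  have hfT : ∀ z, f (T z) = b z y := fun z => (LinearMap.congr_fun hy z).symm
  refine hfx ((hfT x).trans (hx y fun m hm => ?_))
  rw [← hfT]
  exact hfM ⟨m, hm, rfl⟩

end WeakTopology

/-- `f` and `g` are transposes of each other for the pairings `b₁` and `b₂`, as are `•P` and `P•`.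
They are plain maps: linearity follows when the pairings are nondegenerate. -/
def IsTransposePair {𝕜 X₁ Y₁ X₂ Y₂ : Type*} [CommSemiring 𝕜]
    [AddCommMonoid X₁] [Module 𝕜 X₁] [AddCommMonoid Y₁] [Module 𝕜 Y₁]
    [AddCommMonoid X₂] [Module 𝕜 X₂] [AddCommMonoid Y₂] [Module 𝕜 Y₂]
    (b₁ : X₁ →ₗ[𝕜] Y₁ →ₗ[𝕜] 𝕜) (b₂ : X₂ →ₗ[𝕜] Y₂ →ₗ[𝕜] 𝕜) (f : X₁ → X₂) (g : Y₂ → Y₁) : Prop :=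
  ∀ x y, b₂ (f x) y = b₁ x (g y)

namespace IsTransposePair

section CommSemiring

variable {𝕜 X₁ Y₁ X₂ Y₂ : Type*} [CommSemiring 𝕜]
  [AddCommMonoid X₁] [Module 𝕜 X₁] [AddCommMonoid Y₁] [Module 𝕜 Y₁]
  [AddCommMonoid X₂] [Module 𝕜 X₂] [AddCommMonoid Y₂] [Module 𝕜 Y₂]
  {b₁ : X₁ →ₗ[𝕜] Y₁ →ₗ[𝕜] 𝕜} {b₂ : X₂ →ₗ[𝕜] Y₂ →ₗ[𝕜] 𝕜} {f : X₁ → X₂} {g : Y₂ → Y₁}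

theorem left_eq_zero_iff (h : IsTransposePair b₁ b₂ f g) (hb₂ : b₂.SeparatingLeft) {x : X₁} :
    f x = 0 ↔ ∀ y, b₁ x (g y) = 0 := by
  refine ⟨fun hx y => ?_, fun hx => hb₂ _ fun y => (h x y).trans (hx y)⟩
  rw [← h, hx, map_zero, LinearMap.zero_apply]

theorem right_eq_zero_iff (h : IsTransposePair b₁ b₂ f g) (hb₁ : b₁.SeparatingRight) {y : Y₂} :
    g y = 0 ↔ ∀ x, b₂ (f x) y = 0 := by
  refine ⟨fun hy x => ?_, fun hy => hb₁ _ fun x => (h x y).symm.trans (hy x)⟩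
  rw [h, hy, map_zero]

theorem isClosed_ker_left [TopologicalSpace 𝕜] [T1Space 𝕜] (h : IsTransposePair b₁ b₂ f g)
    (hb₂ : b₂.SeparatingLeft) :
    IsClosed[weakTopology fun x y => b₁ x y] {x | f x = 0} := by
  let := weakTopology fun x y => b₁ x y
  simp only [h.left_eq_zero_iff hb₂, Set.ofPred_forall]
  exact isClosed_iInter fun y =>
    isClosed_singleton.preimage (continuous_weakTopology_apply (fun x y => b₁ x y) (g y))

end CommSemiring

theorem exists_linearMap_eq_right {𝕜 X₁ Y₁ X₂ Y₂ : Type*} [CommRing 𝕜]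
    [AddCommMonoid X₁] [Module 𝕜 X₁] [AddCommGroup Y₁] [Module 𝕜 Y₁]
    [AddCommMonoid X₂] [Module 𝕜 X₂] [AddCommMonoid Y₂] [Module 𝕜 Y₂]
    {b₁ : X₁ →ₗ[𝕜] Y₁ →ₗ[𝕜] 𝕜} {b₂ : X₂ →ₗ[𝕜] Y₂ →ₗ[𝕜] 𝕜} {f : X₁ → X₂} {g : Y₂ → Y₁}
    (h : IsTransposePair b₁ b₂ f g) (hb₁ : b₁.SeparatingRight) :
    ∃ L : Y₂ →ₗ[𝕜] Y₁, ⇑L = g := by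
  have ext {y z : Y₁} (hyz : ∀ x, b₁ x y = b₁ x z) : y = z :=
    sub_eq_zero.1 (hb₁ _ fun x => by rw [map_sub, hyz, sub_self])
  refine ⟨⟨⟨g, fun y z => ext fun x => ?_⟩, fun c y => ext fun x => ?_⟩, rfl⟩
  · simp only [map_add, ← h x]
  · simp only [RingHom.id_apply, map_smul, ← h x]

section Field

variable {𝕜 X₁ Y₁ X₂ Y₂ X₃ Y₃ : Type*} [Field 𝕜] [TopologicalSpace 𝕜]
  [AddCommGroup X₁] [Module 𝕜 X₁] [AddCommGroup Y₁] [Module 𝕜 Y₁]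
  [AddCommGroup X₂] [Module 𝕜 X₂] [AddCommGroup Y₂] [Module 𝕜 Y₂]
  [AddCommGroup X₃] [Module 𝕜 X₃] [AddCommGroup Y₃] [Module 𝕜 Y₃]
  {b₁ : X₁ →ₗ[𝕜] Y₁ →ₗ[𝕜] 𝕜} {b₂ : X₂ →ₗ[𝕜] Y₂ →ₗ[𝕜] 𝕜} {b₃ : X₃ →ₗ[𝕜] Y₃ →ₗ[𝕜] 𝕜}

theorem mem_range_right_iff_of_isClosed {f : X₁ → X₂} {g : Y₂ → Y₁}
    (h : IsTransposePair b₁ b₂ f g) (hb₁ : b₁.SeparatingRight) (hb₂ : b₂.SeparatingLeft)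
    (hg : IsClosed[weakTopology fun y x => b₁ x y] (Set.range g)) {y : Y₁} :
    y ∈ Set.range g ↔ ∀ x, f x = 0 → b₁ x y = 0 := by
  constructor
  · rintro ⟨z, rfl⟩ x hx
    exact (h.left_eq_zero_iff hb₂).1 hx z
  · intro hy
    obtain ⟨L, rfl⟩ := h.exists_linearMap_eq_right hb₁
    rw [← LinearMap.coe_range] at hg ⊢
    exact mem_of_isClosed_weakTopology (b := b₁.flip) hg fun x hx =>
      hy x ((h.left_eq_zero_iff hb₂).2 fun z => hx _ ⟨z, rfl⟩)

theorem exact_right_of_isClosed_range {f₁ : X₁ → X₂} {g₁ : Y₂ → Y₁} {f₂ : X₂ → X₃} {g₂ : Y₃ → Y₂}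
    (h₁ : IsTransposePair b₁ b₂ f₁ g₁) (h₂ : IsTransposePair b₂ b₃ f₂ g₂)
    (hb₁ : b₁.SeparatingRight) (hb₂ : b₂.SeparatingRight) (hb₃ : b₃.SeparatingLeft)
    (hf : Function.Exact f₁ f₂)
    (hg₂ : IsClosed[weakTopology fun y x => b₂ x y] (Set.range g₂)) :
    Function.Exact g₂ g₁ := fun y =>
  calc
    g₁ y = 0 ↔ ∀ x, b₂ (f₁ x) y = 0 := h₁.right_eq_zero_iff hb₁
    _ ↔ ∀ x ∈ Set.range f₁, b₂ x y = 0 := by rw [Set.forall_mem_range]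
    _ ↔ ∀ x, f₂ x = 0 → b₂ x y = 0 := forall_congr' fun x => by rw [hf x]
    _ ↔ y ∈ Set.range g₂ := (h₂.mem_range_right_iff_of_isClosed hb₂ hb₃ hg₂).symm

end Field

end IsTransposePair

section PiPairing

variable {𝕜 E E' : Type*} [CommSemiring 𝕜] [AddCommMonoid E] [Module 𝕜 E]
  [AddCommMonoid E'] [Module 𝕜 E']

/-- The componentwise extension `⟨x, x'⟩ = ∑ i, ⟨x i, x' i⟩` of a pairing to families, which turns
`(E^{1×k}, (E')^k)` into a dual pair. -/
def piPairing (B : E →ₗ[𝕜] E' →ₗ[𝕜] 𝕜) (ι : Type*) [Fintype ι] :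
    (ι → E) →ₗ[𝕜] (ι → E') →ₗ[𝕜] 𝕜 :=
  LinearMap.mk₂ 𝕜 (fun x x' => ∑ i, B (x i) (x' i))
    (fun _ _ _ => by simp [Finset.sum_add_distrib]) (fun _ _ _ => by simp [Finset.mul_sum])
    (fun _ _ _ => by simp [Finset.sum_add_distrib]) (fun _ _ _ => by simp [Finset.mul_sum])

variable {B : E →ₗ[𝕜] E' →ₗ[𝕜] 𝕜} {ι : Type*} [Fintype ι]

theorem piPairing_apply (x : ι → E) (x' : ι → E') :
    piPairing B ι x x' = ∑ i, B (x i) (x' i) :=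
  rfl

theorem piPairing_single_left [DecidableEq ι] (i : ι) (x : E) (x' : ι → E') :
    piPairing B ι (Pi.single i x) x' = B x (x' i) := by
  rw [piPairing_apply, Fintype.sum_eq_single i fun j hj => by simp [hj], Pi.single_eq_same]

theorem piPairing_single_right [DecidableEq ι] (i : ι) (x : ι → E) (x' : E') :
    piPairing B ι x (Pi.single i x') = B (x i) x' := by
  rw [piPairing_apply, Fintype.sum_eq_single i fun j hj => by simp [hj], Pi.single_eq_same]

theorem separatingLeft_piPairing (hB : B.SeparatingLeft) : (piPairing B ι).SeparatingLeft := by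
  classical
  exact fun x hx => funext fun i => hB _ fun x' => by
    rw [← piPairing_single_right, hx]

theorem separatingRight_piPairing (hB : B.SeparatingRight) : (piPairing B ι).SeparatingRight := by
  classical
  exact fun x' hx' => funext fun i => hB _ fun x => by
    rw [← piPairing_single_left, hx']

end PiPairing

theorem isTransposePair_rmulE_lmulE' {𝕜 A E E' : Type*} [CommSemiring 𝕜] [Ring A]
    [AddCommGroup E] [Module 𝕜 E] [AddCommGroup E'] [Module 𝕜 E'] [Module A E'] [Module Aᵐᵒᵖ E]
    {B : E →ₗ[𝕜] E' →ₗ[𝕜] 𝕜}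
    (hB : ∀ a : A, IsTransposePair B B (MulOpposite.op a • ·) (a • ·)) {q r : ℕ}
    (P : Matrix (Fin q) (Fin r) A) :
    IsTransposePair (piPairing B (Fin q)) (piPairing B (Fin r)) (rmulE P) (lmulE' P) := by
  intro x x'
  simp only [piPairing_apply, rmulE, lmulE', map_sum, LinearMap.sum_apply, hB _ _ _]
  exact Finset.sum_comm

section RowAction

variable {A E : Type*} [Ring A] [AddCommGroup E] [Module Aᵐᵒᵖ E] {p q r : ℕ}

theorem rmulE_mul (Q : Matrix (Fin p) (Fin q) A) (P : Matrix (Fin q) (Fin r) A) (y : Fin p → E) :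
    rmulE (Q * P) y = rmulE P (rmulE Q y) := by
  funext j
  simp only [rmulE, Matrix.mul_apply, Finset.op_sum, MulOpposite.op_mul, Finset.sum_smul,
    Finset.smul_sum, mul_smul]
  exact Finset.sum_comm

theorem rmulE_one (x : Fin q → E) : rmulE (1 : Matrix (Fin q) (Fin q) A) x = x := by
  funext j
  simp [rmulE, Matrix.one_apply, apply_ite MulOpposite.op, ite_smul]

theorem rmulE_zero (x : Fin q → E) : rmulE (0 : Matrix (Fin q) (Fin r) A) x = 0 := by
  funext j
  simp only [rmulE, Matrix.zero_apply, MulOpposite.op_zero, zero_smul, Finset.sum_const_zero,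
    Pi.zero_apply]

theorem exact_matrix_mul_right_of_exact_rmulA {P : Matrix (Fin p) (Fin q) A}
    {P' : Matrix (Fin q) (Fin r) A} (h : Function.Exact (rmulA P) (rmulA P')) (s : ℕ) :
    Function.Exact (fun S : Matrix (Fin s) (Fin p) A => S * P) (fun Q => Q * P') := by
  intro Q
  calc
    Q * P' = 0 ↔ ∀ i, rmulA P' (Q i) = 0 := funext_iff
    _ ↔ ∀ i, ∃ v, rmulA P v = Q i := forall_congr' fun i => h (Q i)
    _ ↔ ∃ S : Fin s → Fin p → A, ∀ i, rmulA P (S i) = Q i := Classical.skolem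
    _ ↔ ∃ S : Matrix (Fin s) (Fin p) A, S * P = Q := exists_congr fun _ => funext_iff.symm

/-- The equational criterion for one relation extends to systems by treating the columns of `P`
one at a time. -/
theorem RightFlat.exists_eq_rmulE_of_rmulE_eq_zero (hflat : RightFlat A E)
    (P : Matrix (Fin q) (Fin r) A) {x : Fin q → E} (hx : rmulE P x = 0) :
    ∃ (s : ℕ) (y : Fin s → E) (Q : Matrix (Fin s) (Fin q) A), Q * P = 0 ∧ rmulE Q y = x := by
  induction r with
  | zero => exact ⟨q, x, 1, Subsingleton.elim _ _, rmulE_one x⟩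
  | succ r ih =>
    obtain ⟨s, y, Q, hQ, rfl⟩ :=
      ih (P.submatrix id Fin.castSucc) (funext fun j => congrFun hx j.castSucc)
    rw [← rmulE_mul] at hx
    obtain ⟨t, z, R, hR, hy⟩ := hflat s (fun i => (Q * P) i (Fin.last r)) y
      (congrFun hx (Fin.last r))
    obtain rfl : y = rmulE R z := funext hy
    refine ⟨t, z, R * Q, ?_, rmulE_mul R Q z⟩
    rw [Matrix.mul_assoc]
    ext i j
    induction j using Fin.lastCases with
    | last => exact hR i
    | cast j =>
      have hQj (l : Fin s) : (Q * P) l j.castSucc = 0 := congrFun (congrFun hQ l) j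
      rw [Matrix.mul_apply, Matrix.zero_apply]
      simp only [hQj, mul_zero, Finset.sum_const_zero]

theorem RightFlat.exact_rmulE (hflat : RightFlat A E) {P : Matrix (Fin p) (Fin q) A}
    {P' : Matrix (Fin q) (Fin r) A} (h : Function.Exact (rmulA P) (rmulA P')) :
    Function.Exact (rmulE (E := E) P) (rmulE (E := E) P') := by
  intro x
  constructor
  · intro hx
    obtain ⟨s, y, Q, hQ, rfl⟩ := hflat.exists_eq_rmulE_of_rmulE_eq_zero P' hx
    obtain ⟨S, rfl⟩ := (exact_matrix_mul_right_of_exact_rmulA h s Q).1 hQ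
    exact ⟨rmulE S y, (rmulE_mul S P y).symm⟩
  · rintro ⟨y, rfl⟩
    have hPP' : P * P' = 0 := by
      simpa only [Matrix.one_mul] using
        (exact_matrix_mul_right_of_exact_rmulA h p).apply_apply_eq_zero 1
    rw [← rmulE_mul, hPP', rmulE_zero]

end RowAction

section OneInjective

variable {𝕜 A E E' : Type*} [Field 𝕜] [TopologicalSpace 𝕜] [T1Space 𝕜] [Ring A]
  [AddCommGroup E] [Module 𝕜 E] [AddCommGroup E'] [Module 𝕜 E'] [Module A E']
  {B : E →ₗ[𝕜] E' →ₗ[𝕜] 𝕜}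

theorem isClosed_range_lmulE'_of_eq_zero (hB : B.SeparatingRight) {q r : ℕ} (hqr : q = 0 ∨ r = 0)
    (P : Matrix (Fin q) (Fin r) A) :
    IsClosed[weakTopology fun x' x => piPairing B (Fin q) x x']
      (Set.range (lmulE' (E' := E') P)) := by
  have hrange : (Set.range (lmulE' (E' := E') P)).Subsingleton := by
    rcases hqr with rfl | rfl
    · exact Set.subsingleton_of_subsingleton
    · exact Set.subsingleton_range _
  let := weakTopology fun (x' : Fin q → E') x => piPairing B (Fin q) x x'
  have : T1Space (Fin q → E') := t1Space_weakTopology (b := (piPairing B (Fin q)).flip)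
    (LinearMap.flip_separatingLeft.2 (separatingRight_piPairing hB))
  exact hrange.isClosed

theorem oneInjective_of_flat_of_kothe_general [Module Aᵐᵒᵖ E] (hB : B.Nondegenerate)
    (hcomp : ∀ a : A, IsTransposePair B B (MulOpposite.op a • ·) (a • ·))
    (hK : ∀ (q r : ℕ), 0 < q → 0 < r → ∀ P : Matrix (Fin q) (Fin r) A,
      IsClosed[weakTopology fun x x' => piPairing B (Fin r) x x'] (Set.range (rmulE (E := E) P)) →
      IsClosed[weakTopology fun x' x => piPairing B (Fin q) x x']
        (Set.range (lmulE' (E' := E') P)))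
    (hflat : RightFlat A E) {k₁ k₂ k₃ k₄ : ℕ} {P₁ : Matrix (Fin k₁) (Fin k₂) A}
    {P₂ : Matrix (Fin k₂) (Fin k₃) A} {P₃ : Matrix (Fin k₃) (Fin k₄) A}
    (h₁₂ : Function.Exact (rmulA P₁) (rmulA P₂)) (h₂₃ : Function.Exact (rmulA P₂) (rmulA P₃)) :
    Function.Exact (lmulE' (E' := E') P₂) (lmulE' (E' := E') P₁) := by
  have hrange_left : IsClosed[weakTopology fun x x' => piPairing B (Fin k₃) x x']
      (Set.range (rmulE (E := E) P₂)) := by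
    have hker : {x : Fin k₃ → E | rmulE P₃ x = 0} = Set.range (rmulE P₂) :=
      Set.ext (hflat.exact_rmulE h₂₃)
    rw [← hker]
    exact (isTransposePair_rmulE_lmulE' hcomp P₃).isClosed_ker_left (separatingLeft_piPairing hB.1)
  have hrange_right : IsClosed[weakTopology fun x' x => piPairing B (Fin k₂) x x']
      (Set.range (lmulE' (E' := E') P₂)) := by
    by_cases h : k₂ = 0 ∨ k₃ = 0
    · exact isClosed_range_lmulE'_of_eq_zero hB.2 h P₂
    · obtain ⟨hk₂, hk₃⟩ := not_or.1 h
      exact hK k₂ k₃ (Nat.pos_of_ne_zero hk₂) (Nat.pos_of_ne_zero hk₃) P₂ hrange_left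
  exact (isTransposePair_rmulE_lmulE' hcomp P₁).exact_right_of_isClosed_range
    (isTransposePair_rmulE_lmulE' hcomp P₂) (separatingRight_piPairing hB.2)
    (separatingRight_piPairing hB.2) (separatingLeft_piPairing hB.1)
    (hflat.exact_rmulE h₁₂) hrange_right

end OneInjective

/-- If the dual pair `(E, E')` is `(K)` (Köthe) over `A` and the right `A`-module `E`
is flat, then the left `A`-module `E'` is `1`-injective: whenever
`A^{1×k₁} →(•P₁) A^{1×k₂} →(•P₂) A^{1×k₃} →(•P₃) A^{1×k₄}` is exact at `A^{1×k₂}` and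
at `A^{1×k₃}`, the induced sequence `(E')^{k₃} →(P₂•) (E')^{k₂} →(P₁•) (E')^{k₁}`
is exact. -/
theorem oneInjective_of_flat_of_kothe
    {𝕜 : Type} [RCLike 𝕜] {A : Type} [Ring A] [IsDomain A] [Algebra 𝕜 A]
    [IsNoetherianRing A] [IsNoetherianRing Aᵐᵒᵖ]
    {E E' : Type} [AddCommGroup E] [Module 𝕜 E] [AddCommGroup E'] [Module 𝕜 E']
    [Module A E'] [IsScalarTower 𝕜 A E'] [SMulCommClass 𝕜 A E']
    [Module Aᵐᵒᵖ E] [IsScalarTower 𝕜 Aᵐᵒᵖ E] [SMulCommClass 𝕜 Aᵐᵒᵖ E]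
    (B : E →ₗ[𝕜] E' →ₗ[𝕜] 𝕜)
    (hB₁ : ∀ x : E, (∀ x' : E', B x x' = 0) → x = 0)
    (hB₂ : ∀ x' : E', (∀ x : E, B x x' = 0) → x' = 0)
    (hsemi : ∀ a : A, @Continuous E' E' (weakTopology fun x' x => B x x')
      (weakTopology fun x' x => B x x') (fun x' => a • x'))
    (hcomp : ∀ (x : E) (a : A) (x' : E'), B (MulOpposite.op a • x) x' = B x (a • x'))
    (hK : ∀ (q r : ℕ), 0 < q → 0 < r → ∀ P : Matrix (Fin q) (Fin r) A,
      @IsClosed _ (sigmaRow B r) (Set.range (rmulE (E := E) P)) ↔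
      @IsClosed _ (sigmaCol B q) (Set.range (lmulE' (E' := E') P)))
    (hflat : RightFlat A E) :
    ∀ (k₁ k₂ k₃ k₄ : ℕ) (P₁ : Matrix (Fin k₁) (Fin k₂) A)
      (P₂ : Matrix (Fin k₂) (Fin k₃) A) (P₃ : Matrix (Fin k₃) (Fin k₄) A),
      Function.Exact (rmulA P₁) (rmulA P₂) →
      Function.Exact (rmulA P₂) (rmulA P₃) →
      Function.Exact (lmulE' (E' := E') P₂) (lmulE' (E' := E') P₁) :=
  fun _ _ _ _ _ _ _ => oneInjective_of_flat_of_kothe_general ⟨hB₁, hB₂⟩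
    (fun a x x' => hcomp x a x') (fun q r hq hr P => (hK q r hq hr P).1) hflat
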